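/- arXiv:2304.10060 — 6 statements merged into one kernel-verified Lean document; each statement's English description precedes it below -/
import Mathlib

section
/- Let A be a positive bounded self-adjoint operator on a complex Hilbert space H, and let c > 0, η > 0 be real numbers with η·c·‖A‖ ≤ 1. Then for every real α > 0 and every integer s ≥ 1, the operator norm satisfies ‖A^α ∘ (Id − η·c·A)^s‖ ≤ (α/(e·c))^α · (η·s)^{−α}. (Lemma 4.2 of the paper, with A = L_K, c = W'_+(0), κ² = ‖A‖.) -/
/-!
By the continuous functional calculus the operator is `f(A)` with `f x = x ^ α * (1 - η c x) ^ s`,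
so its norm is at most the supremum of `|f|` over the spectrum of `A`, which lies in `[0, ‖A‖]`.
There `0 ≤ 1 - η c x ≤ exp (-η c x)`, hence `f x ≤ x ^ α * exp (-s η c x)`, and with
`u = s η c x / α` this equals `(α / (s η c)) ^ α * (u * exp (-u)) ^ α`. The claim follows
from `u ≤ exp (u - 1)`.
-/

/-- The scalar estimate: the maximum of `x ^ α * exp (-s η c x)` over `x ≥ 0` dominates
`x ^ α * (1 - η c x) ^ s` wherever `η c x ≤ 1`. -/
lemma rpow_mul_one_sub_pow_le {c η α x : ℝ} (hc : 0 < c) (hη : 0 < η) (hα : 0 < α)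
    {s : ℕ} (hs : 1 ≤ s) (hx : 0 ≤ x) (hx1 : η * c * x ≤ 1) :
    x ^ α * (1 - η * c * x) ^ s ≤
      (α / (Real.exp 1 * c)) ^ α * (η * (s : ℝ)) ^ (-α) := by
  have hs0 : (0 : ℝ) < s := by exact_mod_cast hs
  set u : ℝ := s * (η * c * x) / α with hu
  have h1 : (1 - η * c * x) ^ s ≤ Real.exp (-u) ^ α := by
    calc (1 - η * c * x) ^ s ≤ Real.exp (-(η * c * x)) ^ s :=
          pow_le_pow_left₀ (by linarith) (Real.one_sub_le_exp_neg _) s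
      _ = Real.exp (-u) ^ α := by
          rw [← Real.exp_nat_mul, ← Real.exp_mul, hu]
          congr 1
          field_simp
  have h2 : x * Real.exp (-u) ≤ α / (Real.exp 1 * c) / (η * s) := by
    have h3 : u * Real.exp (-u) ≤ (Real.exp 1)⁻¹ := by
      have h4 : u ≤ Real.exp (u - 1) := by linarith [Real.add_one_le_exp (u - 1)]
      calc u * Real.exp (-u) ≤ Real.exp (u - 1) * Real.exp (-u) := by gcongr
        _ = (Real.exp 1)⁻¹ := by
          rw [← Real.exp_add, ← Real.exp_neg]
          congr 1
          ring
    have hxu : x = α / (s * η * c) * u := by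
      rw [hu]
      field_simp
    calc x * Real.exp (-u) = α / (s * η * c) * (u * Real.exp (-u)) := by
          rw [← mul_assoc, ← hxu]
      _ ≤ α / (s * η * c) * (Real.exp 1)⁻¹ := by gcongr
      _ = α / (Real.exp 1 * c) / (η * s) := by field_simp
  calc x ^ α * (1 - η * c * x) ^ s ≤ x ^ α * Real.exp (-u) ^ α := by gcongr
    _ = (x * Real.exp (-u)) ^ α := (Real.mul_rpow hx (Real.exp_pos _).le).symm
    _ ≤ (α / (Real.exp 1 * c) / (η * s)) ^ α := by gcongr
    _ = _ := by
      rw [Real.div_rpow (by positivity) (by positivity), Real.rpow_neg (by positivity),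
        div_eq_mul_inv]

open ContinuousLinearMap

/-- Lemma 4.2 of the paper: for a positive bounded self-adjoint operator `A` on a complex
Hilbert space, `c > 0`, `η > 0` with `η c ‖A‖ ≤ 1`, every real `α > 0` and integer `s ≥ 1`,
`‖A^α ∘ (Id − η c A)^s‖ ≤ (α/(e c))^α (η s)^(−α)`. -/
theorem opNorm_rpow_comp_pow_le
    {H : Type*} [NormedAddCommGroup H] [InnerProductSpace ℂ H] [CompleteSpace H]
    (A : H →L[ℂ] H) (hA : A.IsPositive)
    (c η : ℝ) (hc : 0 < c) (hη : 0 < η) (hηc : η * c * ‖A‖ ≤ 1)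
    (α : ℝ) (hα : 0 < α) (s : ℕ) (hs : 1 ≤ s) :
    ‖(CFC.rpow A α) ∘L (1 - (η * c) • A) ^ s‖ ≤
      (α / (Real.exp 1 * c)) ^ α * (η * (s : ℝ)) ^ (-α) := by
  have hA0 : 0 ≤ A := (nonneg_iff_isPositive A).2 hA
  have hsa : IsSelfAdjoint A := hA.isSelfAdjoint
  have hcont : ContinuousOn (fun x : ℝ => x ^ α) (spectrum ℝ A) :=
    (Real.continuous_rpow_const hα.le).continuousOn
  have hpow : (1 - (η * c) • A) ^ s = cfc (fun x : ℝ => (1 - η * c * x) ^ s) A := by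
    rw [cfc_pow (fun x : ℝ => 1 - η * c * x) s A, cfc_sub (fun _ : ℝ => (1 : ℝ)) _ A,
      cfc_const_one ℝ A, cfc_const_mul_id (η * c) A]
  have hcfc : (CFC.rpow A α) ∘L (1 - (η * c) • A) ^ s =
      cfc (fun x : ℝ => x ^ α * (1 - η * c * x) ^ s) A := by
    rw [cfc_mul (fun x : ℝ => x ^ α) _ A hcont, ← hpow, ← CFC.rpow_eq_cfc_real hA0]
    rfl
  rw [hcfc]
  refine norm_cfc_le (by positivity) fun x hx => ?_
  have hx0 : 0 ≤ x := spectrum_nonneg_of_nonneg hA0 hx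
  have hxA : x ≤ ‖A‖ := by
    -- On the zero space the spectrum is empty; otherwise `‖1‖ = 1` bounds it by `‖A‖`.
    rcases subsingleton_or_nontrivial H with h | h
    · have : Subsingleton (H →L[ℂ] H) := inferInstance
      simp [spectrum.of_subsingleton] at hx
    · exact (le_abs_self x).trans (spectrum.norm_le_norm_of_mem hx)
  have hx1 : η * c * x ≤ 1 := le_trans (by gcongr) hηc
  rw [Real.norm_of_nonneg (mul_nonneg (by positivity) (pow_nonneg (by linarith) s))]
  exact rpow_mul_one_sub_pow_le hc hη hα hs hx0 hx1
end

section
/- Let A be a positive bounded self-adjoint operator on a complex Hilbert space with ‖A‖ ≤ κ² for some κ > 0, and let c > 0, η > 0 satisfy η·c·‖A‖ ≤ 1. Then for every integer T ≥ 1, the sum ∑_{t=0}^{T−1} ‖A^{1/2} ∘ (Id − η·c·A)^t‖ is at most κ + (2/(e·c))^{1/2} · (T/η)^{1/2}. (This is the summed operator-norm estimate used in Proposition 4.5 and in the proofs of Theorems 2.1 and Proposition 4.6.) -/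
/-!
By the continuous functional calculus, `A^{1/2} (1 - η c A)^t` is the function
`x ↦ √x (1 - η c x)^t` applied to `A`, so its norm is bounded by the supremum of that function on
the spectrum of `A`, which lies in `[0, ‖A‖] ⊆ [0, 1/(η c)]`.
For `t = 0` this supremum is at most `√‖A‖ ≤ κ`.
For `t ≥ 1`, the inequalities `1 - u ≤ exp (-u)` and `v exp (-v) ≤ exp (-1)` give the bound
`(2 e η c t)^{-1/2} = K / (2 √t)` with `K = √(2 / (e c η))`.
Since `1 / (2 √t) ≤ √t - √(t - 1)`, the terms with `1 ≤ t < T` telescope to at most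
`K √(T - 1) ≤ K √T`.
-/

open ContinuousLinearMap Finset

/-- Scalar form of the estimate: with `u = s x`, this is
`u (1 - u)^{2t} ≤ u exp (-2tu) ≤ 1 / (2 e t)`, after taking square roots. -/
lemma sqrt_mul_one_sub_pow_le {s x : ℝ} (hs : 0 < s) (hx : 0 ≤ x) (hsx : s * x ≤ 1)
    {t : ℕ} (ht : 0 < t) :
    √x * (1 - s * x) ^ t ≤ √(2 / (Real.exp 1 * s)) * (1 / (2 * √t)) := by
  have ht' : (0 : ℝ) < t := by exact_mod_cast ht
  have h0 : 0 ≤ 1 - s * x := by linarith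
  have h1 : (1 - s * x) ^ (2 * t) ≤ Real.exp (-(2 * t * (s * x))) := by
    calc (1 - s * x) ^ (2 * t) ≤ Real.exp (-(s * x)) ^ (2 * t) :=
          pow_le_pow_left₀ h0 (Real.one_sub_le_exp_neg _) _
      _ = _ := by rw [← Real.exp_nat_mul]; congr 1; push_cast; ring
  have h2 : 2 * t * (s * x) * Real.exp (-(2 * t * (s * x))) ≤ Real.exp (-1) := by
    have := Real.add_one_le_exp (2 * t * (s * x) - 1)
    calc 2 * t * (s * x) * Real.exp (-(2 * t * (s * x)))
        ≤ Real.exp (2 * t * (s * x) - 1) * Real.exp (-(2 * t * (s * x))) := by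
          gcongr; linarith
      _ = Real.exp (-1) := by rw [← Real.exp_add]; congr 1; ring
  refine le_of_sq_le_sq ?_ (by positivity)
  rw [mul_pow, mul_pow, Real.sq_sqrt hx, Real.sq_sqrt (by positivity), div_pow, mul_pow,
    Real.sq_sqrt ht'.le, ← pow_mul, mul_comm t 2]
  have h3 : 2 / (Real.exp 1 * s) * (1 ^ 2 / (2 ^ 2 * (t : ℝ))) = Real.exp (-1) / (2 * t * s) := by
    rw [Real.exp_neg]; field_simp
  rw [h3, le_div_iff₀ (by positivity)]
  calc x * (1 - s * x) ^ (2 * t) * (2 * t * s) ≤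
        x * Real.exp (-(2 * t * (s * x))) * (2 * t * s) := by gcongr
    _ = 2 * t * (s * x) * Real.exp (-(2 * t * (s * x))) := by ring
    _ ≤ _ := h2

section Operator

variable {H : Type*} [NormedAddCommGroup H] [InnerProductSpace ℂ H] [CompleteSpace H]

lemma rpow_half_comp_pow_eq_cfc (A : H →L[ℂ] H) (hA : 0 ≤ A) (s : ℝ) (t : ℕ) :
    (CFC.rpow A (1 / 2 : ℝ)) ∘L (1 - s • A) ^ t =
      cfc (fun x : ℝ ↦ √x * (1 - s * x) ^ t) A := by
  have hsa : IsSelfAdjoint A := hA.isSelfAdjoint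
  have h1 : CFC.rpow A (1 / 2 : ℝ) = cfc Real.sqrt A := by
    change A ^ (1 / 2 : ℝ) = _
    rw [← CFC.sqrt_eq_rpow, CFC.sqrt_eq_real_sqrt A hA, cfcₙ_eq_cfc]
  have h2 : (1 - s • A) = cfc (fun x : ℝ ↦ 1 - s * x) A := by
    rw [cfc_sub (fun _ : ℝ ↦ (1 : ℝ)) (fun x ↦ s * x) A, cfc_const_one ℝ A, cfc_const_mul_id s A]
  rw [h1, h2, ← cfc_pow (fun x : ℝ ↦ 1 - s * x) t A, cfc_mul Real.sqrt _ A]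
  rfl

lemma norm_rpow_half_comp_pow_le (A : H →L[ℂ] H) (hA : 0 ≤ A) {s : ℝ} (hs : 0 < s)
    (hsA : s * ‖A‖ ≤ 1) (t : ℕ) {b : ℝ} (hb : 0 ≤ b)
    (h : ∀ x : ℝ, 0 ≤ x → x ≤ ‖A‖ → √x * (1 - s * x) ^ t ≤ b) :
    ‖(CFC.rpow A (1 / 2 : ℝ)) ∘L (1 - s • A) ^ t‖ ≤ b := by
  rw [rpow_half_comp_pow_eq_cfc A hA]
  refine norm_cfc_le hb fun x hx ↦ ?_
  have hx0 : 0 ≤ x := spectrum_nonneg_of_nonneg hA hx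
  -- A point of the spectrum witnesses `H ≠ 0`, which `spectrum.norm_le_norm_of_mem` needs.
  have : Nontrivial (H →L[ℂ] H) := by
    by_contra hn
    rw [not_nontrivial_iff_subsingleton] at hn
    simp [spectrum.of_subsingleton] at hx
  have hxA : x ≤ ‖A‖ := (le_abs_self x).trans (spectrum.norm_le_norm_of_mem hx)
  have : s * x ≤ 1 := (mul_le_mul_of_nonneg_left hxA hs.le).trans hsA
  rw [Real.norm_of_nonneg (mul_nonneg (Real.sqrt_nonneg _) (pow_nonneg (by linarith) _))]
  exact h x hx0 hxA

end Operator

/-- `1 / √t` is dominated by the increment of `2 √·` over `[t - 1, t]`, at `t = n + 1`. -/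
lemma one_div_two_mul_sqrt_succ_le (n : ℕ) :
    1 / (2 * √((n + 1 : ℕ) : ℝ)) ≤ √((n + 1 : ℕ) : ℝ) - √(n : ℝ) := by
  have hp : 0 < √((n + 1 : ℕ) : ℝ) := Real.sqrt_pos.2 (by positivity)
  have h1 : √((n + 1 : ℕ) : ℝ) ^ 2 = n + 1 := by rw [Real.sq_sqrt (by positivity)]; push_cast; rfl
  have h2 : √(n : ℝ) ^ 2 = n := Real.sq_sqrt (by positivity)
  rw [div_le_iff₀ (by positivity)]
  nlinarith [sq_nonneg (√((n + 1 : ℕ) : ℝ) - √(n : ℝ))]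

/-- The summed operator-norm estimate used in Proposition 4.5 and in the proofs of
Theorem 2.1 and Proposition 4.6: for a positive bounded self-adjoint operator `A` with
`‖A‖ ≤ κ²`, `c > 0`, `η > 0` with `η c ‖A‖ ≤ 1`, and every integer `T ≥ 1`,
`∑_{t=0}^{T−1} ‖A^{1/2} ∘ (Id − η c A)^t‖ ≤ κ + (2/(e c))^{1/2} (T/η)^{1/2}`. -/
theorem sum_opNorm_sqrt_comp_pow_le
    {H : Type*} [NormedAddCommGroup H] [InnerProductSpace ℂ H] [CompleteSpace H]
    (A : H →L[ℂ] H) (hA : A.IsPositive)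
    (κ c η : ℝ) (hκ : 0 < κ) (hAκ : ‖A‖ ≤ κ ^ 2)
    (hc : 0 < c) (hη : 0 < η) (hηc : η * c * ‖A‖ ≤ 1)
    (T : ℕ) (hT : 1 ≤ T) :
    ∑ t ∈ Finset.range T, ‖(CFC.rpow A (1 / 2 : ℝ)) ∘L (1 - (η * c) • A) ^ t‖ ≤
      κ + (2 / (Real.exp 1 * c)) ^ (1 / 2 : ℝ) * ((T : ℝ) / η) ^ (1 / 2 : ℝ) := by
  have hA0 : 0 ≤ A := (ContinuousLinearMap.nonneg_iff_isPositive A).2 hA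
  have hs : 0 < η * c := mul_pos hη hc
  have hzero : ‖(CFC.rpow A (1 / 2 : ℝ)) ∘L (1 - (η * c) • A) ^ 0‖ ≤ κ := by
    refine norm_rpow_half_comp_pow_le A hA0 hs hηc 0 hκ.le fun x _ hxA ↦ ?_
    rw [pow_zero, mul_one]
    exact Real.sqrt_le_iff.2 ⟨hκ.le, hxA.trans hAκ⟩
  have hsucc (n : ℕ) : ‖(CFC.rpow A (1 / 2 : ℝ)) ∘L (1 - (η * c) • A) ^ (n + 1)‖ ≤
      √(2 / (Real.exp 1 * (η * c))) * (1 / (2 * √((n + 1 : ℕ) : ℝ))) :=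
    norm_rpow_half_comp_pow_le A hA0 hs hηc _ (by positivity) fun x hx0 hxA ↦
      sqrt_mul_one_sub_pow_le hs hx0
        ((mul_le_mul_of_nonneg_left hxA hs.le).trans hηc) n.succ_pos
  have hsum (n : ℕ) :
      ∑ t ∈ Finset.range (n + 1), ‖(CFC.rpow A (1 / 2 : ℝ)) ∘L (1 - (η * c) • A) ^ t‖ ≤
        κ + √(2 / (Real.exp 1 * (η * c))) * √(n : ℝ) := by
    induction n with
    | zero => simpa using hzero
    | succ n ih =>
      rw [Finset.sum_range_succ]
      have := mul_le_mul_of_nonneg_left (one_div_two_mul_sqrt_succ_le n)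
        (Real.sqrt_nonneg (2 / (Real.exp 1 * (η * c))))
      have := hsucc n
      linarith
  obtain ⟨n, rfl⟩ : ∃ n, T = n + 1 := ⟨T - 1, by omega⟩
  refine (hsum n).trans ?_
  rw [← Real.sqrt_eq_rpow, ← Real.sqrt_eq_rpow, ← Real.sqrt_mul (by positivity),
    ← Real.sqrt_mul (by positivity)]
  have : 2 / (Real.exp 1 * (η * c)) * (n : ℝ) ≤
      2 / (Real.exp 1 * c) * (((n + 1 : ℕ) : ℝ) / η) := by
    calc 2 / (Real.exp 1 * (η * c)) * (n : ℝ)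
        ≤ 2 / (Real.exp 1 * (η * c)) * ((n + 1 : ℕ) : ℝ) := by gcongr; omega
      _ = _ := by field_simp
  gcongr
end

section
/- Let A be a positive bounded self-adjoint operator on a complex Hilbert space with ‖A‖ ≤ κ² for some κ > 0, let 0 < β < 1, let c > 0, and let 0 < η ≤ 1 satisfy η·c·‖A‖ ≤ 1. Then for every integer T ≥ 1, η² · ∑_{t=0}^{T−1} ‖A^{1−β} ∘ (Id − η·c·A)^{2t}‖ ≤ ( κ^{2−2β} + ((1−β)/(e·c))^{1−β} · (1/β) ) · η^{1+β} · T^{β}. (This is the capacity-dependent operator-sum estimate used in the proof of Theorem 2.2.) -/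
/-!
The continuous functional calculus turns `A^{1-β} (1 - η c A)^{2t}` into the function
`x ↦ x^{1-β} (1 - η c x)^{2t}` on the spectrum of `A`, which lies in `[0, ‖A‖]`, so each summand is
bounded by the supremum of this function there (`norm_rpow_comp_pow_le`). For `t = 0` the supremum
is at most `‖A‖^{1-β} ≤ κ^{2-2β}`. For `t ≥ 1`, the inequality `1 - y ≤ exp (-y)` together with
`x^a exp (-b x) ≤ (a / (e b))^a` (`rpow_mul_exp_neg_le`) gives the bound
`((1-β)/(e c))^{1-β} η^{β-1} t^{β-1}`. The sum of the `t^{β-1}` is at most `T^β / β`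
(`sum_rpow_sub_one_le`), by Bernoulli's inequality for exponents in `[0, 1]`. Finally `η ≤ 1` and
`1 ≤ T` absorb the `t = 0` term, as `η² ≤ η^{1+β} T^β`.
-/

/-- The maximum of `x ^ a * exp (-b x)` over `x ≥ 0`, attained at `x = a / b`. -/
lemma rpow_mul_exp_neg_le {a b x : ℝ} (ha : 0 < a) (hb : 0 < b) (hx : 0 ≤ x) :
    x ^ a * Real.exp (-(b * x)) ≤ (a / (Real.exp 1 * b)) ^ a := by
  have h1 : Real.exp (-(b * x)) = Real.exp (-(b * x / a)) ^ a := by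
    rw [← Real.exp_mul]; congr 1; field_simp
  rw [h1, ← Real.mul_rpow hx (Real.exp_pos _).le]
  refine Real.rpow_le_rpow (by positivity) ?_ ha.le
  have h2 : b * x / a ≤ Real.exp (b * x / a - 1) := by
    have := Real.add_one_le_exp (b * x / a - 1)
    linarith
  rw [Real.exp_sub, le_div_iff₀ (Real.exp_pos _)] at h2
  rw [Real.exp_neg, ← div_eq_mul_inv, div_le_div_iff₀ (Real.exp_pos _) (by positivity)]
  calc x * (Real.exp 1 * b) = a * (b * x / a * Real.exp 1) := by field_simp
    _ ≤ a * Real.exp (b * x / a) := by gcongr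

lemma sum_rpow_sub_one_le {β : ℝ} (h0 : 0 < β) (h1 : β < 1) (n : ℕ) :
    ∑ t ∈ Finset.range n, ((t : ℝ) + 1) ^ (β - 1) ≤ (n : ℝ) ^ β * (1 / β) := by
  induction n with
  | zero => simp [Real.zero_rpow h0.ne']
  | succ n ih =>
    rw [Finset.sum_range_succ]
    have hs : (0 : ℝ) < (n : ℝ) + 1 := by positivity
    -- Bernoulli at `-1 / (n + 1)`, rescaled: `n ^ β ≤ (n + 1) ^ β - β (n + 1) ^ (β - 1)`.
    have key : (n : ℝ) ^ β ≤ ((n : ℝ) + 1) ^ β - β * ((n : ℝ) + 1) ^ (β - 1) := by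
      have hB := rpow_one_add_le_one_add_mul_self (s := -1 / ((n : ℝ) + 1)) (p := β)
        (by rw [le_div_iff₀ hs]; linarith [(Nat.cast_nonneg n : (0 : ℝ) ≤ n)]) h0.le h1.le
      have e1 : (1 : ℝ) + -1 / ((n : ℝ) + 1) = n / ((n : ℝ) + 1) := by field_simp; ring
      rw [e1, Real.div_rpow (Nat.cast_nonneg n) hs.le, div_le_iff₀ (by positivity)] at hB
      rw [Real.rpow_sub_one hs.ne']
      calc (n : ℝ) ^ β ≤ _ := hB
        _ = _ := by ring
    have : (((n + 1 : ℕ) : ℝ)) ^ β * (1 / β)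
        = (((n : ℝ) + 1) ^ β - β * ((n : ℝ) + 1) ^ (β - 1)) * (1 / β)
          + ((n : ℝ) + 1) ^ (β - 1) := by
      push_cast; field_simp; ring
    rw [this]
    gcongr
    exact ih.trans (by gcongr)

/-- A bound on `[0, ‖A‖]` for the scalar function transfers to the operator. -/
lemma norm_rpow_comp_pow_le
    {H : Type*} [NormedAddCommGroup H] [InnerProductSpace ℂ H] [CompleteSpace H]
    (A : H →L[ℂ] H) (hA : A.IsPositive) {a s M : ℝ} (ha : 0 < a) (n : ℕ) (hM : 0 ≤ M)
    (h : ∀ x : ℝ, 0 ≤ x → x ≤ ‖A‖ → x ^ a * |1 - s * x| ^ n ≤ M) :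
    ‖(CFC.rpow A a) ∘L (1 - s • A) ^ n‖ ≤ M := by
  have hA0 : 0 ≤ A := (ContinuousLinearMap.nonneg_iff_isPositive A).2 hA
  have hsa : IsSelfAdjoint A := IsSelfAdjoint.of_nonneg hA0
  have hcont : ContinuousOn (fun x : ℝ => x ^ a) (spectrum ℝ A) :=
    (Real.continuous_rpow_const ha.le).continuousOn
  have e1 : CFC.rpow A a = cfc (fun x : ℝ => x ^ a) A := CFC.rpow_eq_cfc_real (a := A) (y := a) hA0
  have e2 : (1 - s • A) ^ n = cfc (fun x : ℝ => (1 - s * x) ^ n) A := by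
    rw [cfc_pow (fun x : ℝ => 1 - s * x) n A, cfc_sub (fun _ : ℝ => (1 : ℝ)) (fun x => s * x) A,
      cfc_const_one ℝ A, cfc_const_mul_id s A]
  have e3 : (CFC.rpow A a) ∘L (1 - s • A) ^ n
      = cfc (fun x : ℝ => x ^ a * (1 - s * x) ^ n) A := by
    rw [cfc_mul (fun x : ℝ => x ^ a) (fun x : ℝ => (1 - s * x) ^ n) A hcont, ← e1, ← e2]
    rfl
  rw [e3]
  refine norm_cfc_le hM fun x hx => ?_
  have hx0 : 0 ≤ x := spectrum_nonneg_of_nonneg hA0 hx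
  have hx1 : x ≤ ‖A‖ := by
    have := norm_apply_le_norm_cfc (fun x : ℝ => x) A hx
    rw [cfc_id' ℝ A] at this
    exact (le_abs_self x).trans this
  rw [norm_mul, norm_pow, Real.norm_eq_abs, Real.norm_eq_abs,
    abs_of_nonneg (Real.rpow_nonneg hx0 a)]
  exact h x hx0 hx1


/-- The capacity-dependent operator-sum estimate used in the proof of Theorem 2.2:
for a positive bounded self-adjoint operator `A` with `‖A‖ ≤ κ²`, `0 < β < 1`, `c > 0`,
`0 < η ≤ 1` with `η c ‖A‖ ≤ 1`, and every integer `T ≥ 1`,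
`η² ∑_{t=0}^{T−1} ‖A^{1−β} ∘ (Id − η c A)^{2t}‖
  ≤ (κ^{2−2β} + ((1−β)/(e c))^{1−β} (1/β)) η^{1+β} T^β`. -/
theorem sum_opNorm_rpow_comp_pow_le_capacity
    {H : Type*} [NormedAddCommGroup H] [InnerProductSpace ℂ H] [CompleteSpace H]
    (A : H →L[ℂ] H) (hA : A.IsPositive)
    (κ β c η : ℝ) (hκ : 0 < κ) (hAκ : ‖A‖ ≤ κ ^ 2)
    (hβ0 : 0 < β) (hβ1 : β < 1) (hc : 0 < c)
    (hη : 0 < η) (hη1 : η ≤ 1) (hηc : η * c * ‖A‖ ≤ 1)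
    (T : ℕ) (hT : 1 ≤ T) :
    η ^ 2 * ∑ t ∈ Finset.range T, ‖(CFC.rpow A (1 - β)) ∘L (1 - (η * c) • A) ^ (2 * t)‖ ≤
      (κ ^ (2 - 2 * β) + ((1 - β) / (Real.exp 1 * c)) ^ (1 - β) * (1 / β)) *
        η ^ (1 + β) * (T : ℝ) ^ β := by
  obtain ⟨n, rfl⟩ : ∃ n, T = n + 1 := ⟨T - 1, by omega⟩
  have ha : 0 < 1 - β := by linarith
  have hs : 0 < η * c := by positivity
  have h0 : ‖(CFC.rpow A (1 - β)) ∘L (1 - (η * c) • A) ^ (2 * 0)‖ ≤ κ ^ (2 - 2 * β) := by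
    refine norm_rpow_comp_pow_le A hA ha _ (by positivity) fun x hx0 hx1 => ?_
    have : κ ^ (2 - 2 * β) = (κ ^ 2) ^ (1 - β) := by
      rw [← Real.rpow_natCast κ 2, ← Real.rpow_mul hκ.le]; congr 1; push_cast; ring
    rw [this, mul_zero, pow_zero, mul_one]
    exact Real.rpow_le_rpow hx0 (hx1.trans hAκ) ha.le
  set D : ℝ := ((1 - β) / (Real.exp 1 * c)) ^ (1 - β) with hD
  have hD0 : 0 ≤ D := by positivity
  have ht : ∀ t : ℕ, ‖(CFC.rpow A (1 - β)) ∘L (1 - (η * c) • A) ^ (2 * (t + 1))‖ ≤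
      D * η ^ (β - 1) * ((t : ℝ) + 1) ^ (β - 1) := by
    intro t
    have hτ : (0 : ℝ) < (t : ℝ) + 1 := by positivity
    refine norm_rpow_comp_pow_le A hA ha _ (by positivity) fun x hx0 hx1 => ?_
    have hle : η * c * x ≤ 1 := (mul_le_mul_of_nonneg_left hx1 hs.le).trans hηc
    have hb : |1 - η * c * x| ^ (2 * (t + 1)) ≤ Real.exp (-((η * c * (t + 1)) * x)) := by
      rw [abs_of_nonneg (by linarith)]
      -- Half of the exponent suffices, as the base lies in `[0, 1]`.
      calc (1 - η * c * x) ^ (2 * (t + 1)) ≤ (1 - η * c * x) ^ (t + 1) :=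
            pow_le_pow_of_le_one (by linarith) (by nlinarith [mul_nonneg hs.le hx0]) (by omega)
        _ ≤ (Real.exp (-(η * c * x))) ^ (t + 1) := by
            exact pow_le_pow_left₀ (by linarith) (Real.one_sub_le_exp_neg _) _
        _ = _ := by rw [← Real.exp_nat_mul]; congr 1; push_cast; ring
    have hflip : ∀ y : ℝ, 0 < y → y ^ (β - 1) = (y⁻¹) ^ (1 - β) := fun y hy => by
      rw [Real.inv_rpow hy.le, ← Real.rpow_neg hy.le, neg_sub]
    calc _ ≤ x ^ (1 - β) * Real.exp (-((η * c * (t + 1)) * x)) := by gcongr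
      _ ≤ ((1 - β) / (Real.exp 1 * (η * c * (t + 1)))) ^ (1 - β) :=
          rpow_mul_exp_neg_le ha (by positivity) hx0
      _ = D * η ^ (β - 1) * ((t : ℝ) + 1) ^ (β - 1) := by
          rw [hflip η hη, hflip _ hτ, hD, ← Real.mul_rpow (by positivity) (by positivity),
            ← Real.mul_rpow (by positivity) (by positivity)]
          congr 1
          field_simp
  have hη2 : η ^ 2 * η ^ (β - 1) = η ^ (1 + β) := by
    rw [← Real.rpow_natCast η 2, ← Real.rpow_add hη]; congr 1; push_cast; ring
  have hη3 : η ^ 2 ≤ η ^ (1 + β) := by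
    rw [← Real.rpow_natCast η 2]
    exact Real.rpow_le_rpow_of_exponent_ge hη hη1 (by push_cast; linarith)
  have hT1 : 1 ≤ ((n + 1 : ℕ) : ℝ) ^ β := Real.one_le_rpow (by exact_mod_cast hT) hβ0.le
  have hS : ∑ t ∈ Finset.range n, ((t : ℝ) + 1) ^ (β - 1) ≤ ((n + 1 : ℕ) : ℝ) ^ β * (1 / β) := by
    refine (sum_rpow_sub_one_le hβ0 hβ1 n).trans ?_
    gcongr
    omega
  rw [Finset.sum_range_succ']
  calc _ ≤ η ^ 2 * (∑ t ∈ Finset.range n, D * η ^ (β - 1) * ((t : ℝ) + 1) ^ (β - 1)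
          + κ ^ (2 - 2 * β)) := by
        gcongr with t _
        exact ht t
    _ = D * (η ^ 2 * η ^ (β - 1)) * ∑ t ∈ Finset.range n, ((t : ℝ) + 1) ^ (β - 1)
          + κ ^ (2 - 2 * β) * (η ^ 2 * 1) := by
        rw [← Finset.mul_sum]; ring
    _ ≤ D * η ^ (1 + β) * (((n + 1 : ℕ) : ℝ) ^ β * (1 / β))
          + κ ^ (2 - 2 * β) * (η ^ (1 + β) * ((n + 1 : ℕ) : ℝ) ^ β) := by
        rw [hη2]
        gcongr
    _ = _ := by ring
end

section
/- Under the abstract online iteration setting below, if the step size satisfies η·κ²·C_W ≤ 1, then for every t ≥ 1 one has ‖f_{t+1}‖² ≤ M²·C_W·η·t. (Proposition 4.3 of the paper: the iterates of the robust online algorithm grow at most like the square root of the step count.) -/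
/-!
One step of the iteration raises `‖f‖²` by at most `η C_W M²`. Write `p = ⟪f_t, k_t⟫` and let
`a = η w(·)` be the effective step size, so that `a ‖k_t‖² ≤ η C_W κ² ≤ 1`. Expanding the square,
`‖f_{t+1}‖² - ‖f_t‖² = -2 a (p - y) p + a² (p - y)² ‖k_t‖² ≤ a ((p - y)² - 2 p (p - y))`,
and the right-hand side equals `a (y² - p²) ≤ a y² ≤ η C_W M²`. Summing over the steps
from `f_1 = 0` gives the bound.
-/

open scoped RealInnerProductSpace

/-- One step with effective step size `a`: the cross term absorbs the quadratic term up to `a y²`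
as soon as `a ‖k‖² ≤ 1`. -/
lemma norm_sq_sub_smul_le {H : Type*} [NormedAddCommGroup H] [InnerProductSpace ℝ H]
    (g k : H) (y a : ℝ) (ha : 0 ≤ a) (hak : a * ‖k‖ ^ 2 ≤ 1) :
    ‖g - (a * (⟪g, k⟫ - y)) • k‖ ^ 2 ≤ ‖g‖ ^ 2 + a * y ^ 2 := by
  rw [norm_sub_sq_real, real_inner_smul_right, norm_smul, mul_pow, Real.norm_eq_abs, sq_abs]
  set p := ⟪g, k⟫
  have h1 : a * (p - y) ^ 2 * (a * ‖k‖ ^ 2) ≤ a * (p - y) ^ 2 * 1 :=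
    mul_le_mul_of_nonneg_left hak (by positivity)
  have h2 : 0 ≤ a * p ^ 2 := by positivity
  linarith

/-- Proposition 4.3 of the paper: in the abstract online iteration setting, if
`η κ² C_W ≤ 1`, then the iterates satisfy `‖f_{t+1}‖² ≤ M² C_W η t` for all `t ≥ 1`. -/
theorem online_iterates_norm_sq_le
    {H : Type*} [NormedAddCommGroup H] [InnerProductSpace ℝ H]
    (κ M C_W σ η : ℝ) (hκ : 0 < κ) (hM : 0 < M) (hCW : 0 < C_W) (hσ : 0 < σ) (hη : 0 < η)
    (k : ℕ → H) (hk : ∀ t, 1 ≤ t → ‖k t‖ ≤ κ)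
    (y : ℕ → ℝ) (hy : ∀ t, 1 ≤ t → |y t| ≤ M)
    (w : ℝ → ℝ) (hw : ∀ s : ℝ, 0 ≤ s → 0 ≤ w s ∧ w s ≤ C_W)
    (f : ℕ → H) (hf1 : f 1 = 0)
    (hrec : ∀ t, 1 ≤ t →
      f (t + 1) = f t - (η * w ((y t - ⟪f t, k t⟫) ^ 2 / σ ^ 2) * (⟪f t, k t⟫ - y t)) • k t)
    (hstep : η * κ ^ 2 * C_W ≤ 1) :
    ∀ t, 1 ≤ t → ‖f (t + 1)‖ ^ 2 ≤ M ^ 2 * C_W * η * (t : ℝ) := by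
  have step : ∀ t, 1 ≤ t → ‖f (t + 1)‖ ^ 2 ≤ ‖f t‖ ^ 2 + M ^ 2 * C_W * η := by
    intro t ht
    rw [hrec t ht]
    obtain ⟨hw0, hw1⟩ := hw ((y t - ⟪f t, k t⟫) ^ 2 / σ ^ 2) (by positivity)
    set W := w ((y t - ⟪f t, k t⟫) ^ 2 / σ ^ 2)
    have hk2 : ‖k t‖ ^ 2 ≤ κ ^ 2 := pow_le_pow_left₀ (norm_nonneg _) (hk t ht) 2
    have hy2 : y t ^ 2 ≤ M ^ 2 := sq_le_sq' (abs_le.mp (hy t ht)).1 (abs_le.mp (hy t ht)).2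
    have hak : η * W * ‖k t‖ ^ 2 ≤ 1 :=
      calc η * W * ‖k t‖ ^ 2 ≤ η * C_W * κ ^ 2 := by gcongr
        _ ≤ 1 := by linarith
    have hay : η * W * y t ^ 2 ≤ η * C_W * M ^ 2 := by gcongr
    have := norm_sq_sub_smul_le (f t) (k t) (y t) (η * W) (by positivity) hak
    linarith
  intro t ht
  induction t, ht using Nat.le_induction with
  | base => simpa [hf1] using step 1 le_rfl
  | succ t ht ih =>
    have := step (t + 1) (by omega)
    push_cast
    linarith
end

section
/- Under the abstract online iteration setting below, assume additionally that w₀ ∈ ℝ, c_p > 0, p > 0 satisfy |w(s) − w₀| ≤ c_p·s^p for all s > 0, that η·κ²·C_W ≤ 1, and that η·T ≥ 1 for an integer T ≥ 1. Then for every t with 1 ≤ t ≤ T, the vector E_{t,σ} := (w₀ − w( (y_t − ⟨f_t, k_t⟩)²/σ² )) · ( ⟨f_t, k_t⟩ − y_t ) · k_t satisfies ‖E_{t,σ}‖ ≤ κ · c_p · (M + κ·M·√C_W)^{2p+1} · (η·T)^{p+1/2} / σ^{2p}. (Proposition 4.4 of the paper.) -/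
/-!
The claim reduces to a bound on the residual `r = ⟪f_t, k_t⟫ - y_t`. Expanding the square, one step
with weight `a = η w(·)` satisfying `a κ² ≤ 1` changes `‖f‖²` by at most
`a (r² - 2 r (r + y)) = a (y² - (r + y)²) ≤ a y²` (`norm_sq_step_le`), so by induction
`‖f_t‖² ≤ η C_W M² t` (`norm_sq_iterate_le`). Cauchy–Schwarz and `η T ≥ 1` then give
`|r| ≤ (M + κ M √C_W) √(η T)`. Finally `‖E_{t,σ}‖ ≤ κ c_p |r|^{2p+1} / σ^{2p}`, by the hypothesis on
`w` at `s = r² / σ²` when `r ≠ 0`, and trivially when `r = 0`.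
-/

open scoped RealInnerProductSpace

/-- One step of size `a` with `a κ² ≤ 1` increases the squared norm by at most `a y²`. -/
lemma norm_sq_step_le {H : Type*} [NormedAddCommGroup H] [InnerProductSpace ℝ H]
    {κ a y : ℝ} {g k : H} (hk : ‖k‖ ≤ κ) (ha : 0 ≤ a) (haκ : a * κ ^ 2 ≤ 1) :
    ‖g - (a * (⟪g, k⟫ - y)) • k‖ ^ 2 ≤ ‖g‖ ^ 2 + a * y ^ 2 := by
  rw [norm_sub_sq_real, inner_smul_right, norm_smul, mul_pow, Real.norm_eq_abs, sq_abs]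
  set u := ⟪g, k⟫
  have hk2 : a * ‖k‖ ^ 2 ≤ 1 := le_trans (by gcongr) haκ
  have h : a * (u - y) ^ 2 * (a * ‖k‖ ^ 2) ≤ a * (u - y) ^ 2 * 1 := by gcongr
  nlinarith [mul_nonneg ha (sq_nonneg u)]

/-- The squared norm of the iterates grows at most linearly in time. -/
lemma norm_sq_iterate_le {H : Type*} [NormedAddCommGroup H] [InnerProductSpace ℝ H]
    {κ M C_W σ η : ℝ} (hη : 0 < η)
    {k : ℕ → H} (hk : ∀ t, 1 ≤ t → ‖k t‖ ≤ κ)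
    {y : ℕ → ℝ} (hy : ∀ t, 1 ≤ t → |y t| ≤ M)
    {w : ℝ → ℝ} (hw : ∀ s : ℝ, 0 ≤ s → 0 ≤ w s ∧ w s ≤ C_W)
    {f : ℕ → H} (hf1 : f 1 = 0)
    (hrec : ∀ t, 1 ≤ t →
      f (t + 1) = f t - (η * w ((y t - ⟪f t, k t⟫) ^ 2 / σ ^ 2) * (⟪f t, k t⟫ - y t)) • k t)
    (hstep : η * κ ^ 2 * C_W ≤ 1) (t : ℕ) (ht : 1 ≤ t) :
    ‖f t‖ ^ 2 ≤ η * C_W * M ^ 2 * t := by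
  have hC : 0 ≤ C_W := (hw 0 le_rfl).1.trans (hw 0 le_rfl).2
  induction t, ht using Nat.le_induction with
  | base => rw [hf1, norm_zero, zero_pow two_ne_zero]; positivity
  | succ t ht ih =>
    obtain ⟨hw0, hwC⟩ := hw ((y t - ⟪f t, k t⟫) ^ 2 / σ ^ 2) (by positivity)
    rw [hrec t ht]
    generalize w ((y t - ⟪f t, k t⟫) ^ 2 / σ ^ 2) = v at hw0 hwC
    have hv : η * v * κ ^ 2 ≤ 1 :=
      calc η * v * κ ^ 2 ≤ η * C_W * κ ^ 2 := by gcongr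
        _ = η * κ ^ 2 * C_W := by ring
        _ ≤ 1 := hstep
    have hy2 : y t ^ 2 ≤ M ^ 2 := sq_le_sq' (abs_le.1 (hy t ht)).1 (abs_le.1 (hy t ht)).2
    have hinc : η * v * y t ^ 2 ≤ η * C_W * M ^ 2 := by gcongr
    have := norm_sq_step_le (g := f t) (y := y t) (hk t ht) (mul_nonneg hη.le hw0) hv
    push_cast
    linarith

/-- Proposition 4.4 of the paper: in the abstract online iteration setting, if
`|w(s) − w₀| ≤ c_p s^p` for all `s > 0`, `η κ² C_W ≤ 1` and `η T ≥ 1`, then for `1 ≤ t ≤ T`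
the vector `E_{t,σ} = (w₀ − w((y_t − ⟨f_t,k_t⟩)²/σ²)) (⟨f_t,k_t⟩ − y_t) k_t` satisfies
`‖E_{t,σ}‖ ≤ κ c_p (M + κ M √C_W)^{2p+1} (η T)^{p+1/2} / σ^{2p}`. -/
theorem online_iterates_Esigma_norm_le
    {H : Type*} [NormedAddCommGroup H] [InnerProductSpace ℝ H]
    (κ M C_W σ η : ℝ) (hκ : 0 < κ) (hM : 0 < M) (hCW : 0 < C_W) (hσ : 0 < σ) (hη : 0 < η)
    (k : ℕ → H) (hk : ∀ t, 1 ≤ t → ‖k t‖ ≤ κ)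
    (y : ℕ → ℝ) (hy : ∀ t, 1 ≤ t → |y t| ≤ M)
    (w : ℝ → ℝ) (hw : ∀ s : ℝ, 0 ≤ s → 0 ≤ w s ∧ w s ≤ C_W)
    (f : ℕ → H) (hf1 : f 1 = 0)
    (hrec : ∀ t, 1 ≤ t →
      f (t + 1) = f t - (η * w ((y t - ⟪f t, k t⟫) ^ 2 / σ ^ 2) * (⟪f t, k t⟫ - y t)) • k t)
    (w₀ c_p p : ℝ) (hcp : 0 < c_p) (hp : 0 < p)
    (hwp : ∀ s : ℝ, 0 < s → |w s - w₀| ≤ c_p * s ^ p)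
    (hstep : η * κ ^ 2 * C_W ≤ 1)
    (T : ℕ) (hT : 1 ≤ T) (hηT : 1 ≤ η * (T : ℝ)) :
    ∀ t, 1 ≤ t → t ≤ T →
      ‖(w₀ - w ((y t - ⟪f t, k t⟫) ^ 2 / σ ^ 2)) • ((⟪f t, k t⟫ - y t) • k t)‖ ≤
        κ * c_p * (M + κ * M * Real.sqrt C_W) ^ (2 * p + 1) * (η * (T : ℝ)) ^ (p + 1 / 2)
          / σ ^ (2 * p) := by
  intro t ht htT
  have hκM : 0 < M + κ * M * Real.sqrt C_W := by positivity
  have hηT0 : 0 < η * (T : ℝ) := by linarith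
  have hS : 1 ≤ Real.sqrt (η * T) := Real.one_le_sqrt.2 hηT
  have hf : ‖f t‖ ≤ M * Real.sqrt C_W * Real.sqrt (η * T) := by
    refine le_of_sq_le_sq ?_ (by positivity)
    calc ‖f t‖ ^ 2 ≤ η * C_W * M ^ 2 * t := norm_sq_iterate_le hη hk hy hw hf1 hrec hstep t ht
      _ ≤ η * C_W * M ^ 2 * T := by gcongr
      _ = (M * Real.sqrt C_W * Real.sqrt (η * T)) ^ 2 := by
        rw [mul_pow, mul_pow, Real.sq_sqrt hCW.le, Real.sq_sqrt hηT0.le]; ring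
  have hr : |⟪f t, k t⟫ - y t| ≤ (M + κ * M * Real.sqrt C_W) * Real.sqrt (η * T) :=
    calc |⟪f t, k t⟫ - y t| ≤ |⟪f t, k t⟫| + |y t| := abs_sub _ _
      _ ≤ ‖f t‖ * ‖k t‖ + M := add_le_add (abs_real_inner_le_norm _ _) (hy t ht)
      _ ≤ (M * Real.sqrt C_W * Real.sqrt (η * T)) * κ + M * Real.sqrt (η * T) := by
        gcongr
        · exact hk t ht
        · exact le_mul_of_one_le_right hM.le hS
      _ = _ := by ring
  rw [← neg_sub ⟪f t, k t⟫ (y t), neg_sq]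
  generalize ⟪f t, k t⟫ - y t = r at hr
  rcases eq_or_ne r 0 with rfl | hr0
  · rw [zero_smul, smul_zero, norm_zero]
    positivity
  have hrpos : 0 < |r| := abs_pos.2 hr0
  have hwr : |w₀ - w (r ^ 2 / σ ^ 2)| ≤ c_p * (|r| ^ (2 * p) / σ ^ (2 * p)) := by
    have h := hwp (r ^ 2 / σ ^ 2) (by positivity)
    rwa [abs_sub_comm, Real.div_rpow (sq_nonneg r) (sq_nonneg σ), ← sq_abs r,
      ← Real.rpow_natCast_mul hrpos.le, ← Real.rpow_natCast_mul hσ.le, Nat.cast_ofNat,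
      sq_abs] at h
  have hpow : |r| ^ (2 * p + 1) ≤
      (M + κ * M * Real.sqrt C_W) ^ (2 * p + 1) * (η * (T : ℝ)) ^ (p + 1 / 2) := by
    calc |r| ^ (2 * p + 1)
        ≤ ((M + κ * M * Real.sqrt C_W) * Real.sqrt (η * T)) ^ (2 * p + 1) := by gcongr
      _ = _ := by
        rw [Real.mul_rpow hκM.le (Real.sqrt_nonneg _), Real.sqrt_eq_rpow (η * T),
          ← Real.rpow_mul hηT0.le]
        ring_nf
  calc ‖(w₀ - w (r ^ 2 / σ ^ 2)) • (r • k t)‖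
      = |w₀ - w (r ^ 2 / σ ^ 2)| * (|r| * ‖k t‖) := by
        rw [norm_smul, norm_smul, Real.norm_eq_abs, Real.norm_eq_abs]
    _ ≤ c_p * (|r| ^ (2 * p) / σ ^ (2 * p)) * (|r| * κ) := by
        gcongr
        exact hk t ht
    _ = κ * c_p * |r| ^ (2 * p + 1) / σ ^ (2 * p) := by
        rw [Real.rpow_add hrpos, Real.rpow_one]; ring
    _ ≤ κ * c_p * ((M + κ * M * Real.sqrt C_W) ^ (2 * p + 1) * (η * (T : ℝ)) ^ (p + 1 / 2))
          / σ ^ (2 * p) := by gcongr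
    _ = _ := by rw [← mul_assoc]
end

section
/- Let A be a positive bounded self-adjoint operator on a complex Hilbert space H with ‖A‖ ≤ κ² for some κ > 0, let c > 0, and let η > 0 satisfy η·c·‖A‖ ≤ 1. Let T ≥ 1 be an integer with η ≤ T, and let e_1, …, e_T ∈ H satisfy ‖e_t‖ ≤ D for all t and some D ≥ 0. Then η² · ‖ ∑_{t=1}^{T} A^{1/2} (Id − η·c·A)^{T−t} e_t ‖² ≤ ( κ + (2/(e·c))^{1/2} )² · η · T · D². (This is the deterministic core of Proposition 4.5 of the paper, bounding the accumulated drift term.) -/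
/-!
Write `a = η c`, `S = A^{1/2}` and `B = Id - a A`. The spectrum of `A` lies in `[0, ‖A‖]`, and
`0 ≤ 1 - a x ≤ 1` there. By the C*-identity `‖S B^n‖² = ‖B^n A B^n‖`, which by the continuous
functional calculus is at most the supremum of `x (1 - a x)^{2n}` over the spectrum. This is at most
`κ²`, and for `n ≥ 1` also at most `1 / (2 e n a)`, because `1 - y ≤ exp (-y)` and
`y exp (-y) ≤ exp (-1)`.

Summing over `n = T - t` with `∑_{n=1}^{T-1} n^{-1/2} ≤ 2 √T` bounds the norm of the sum by
`(κ + √(2 T / (e a))) D`. Multiplying by `η` and using `η ≤ √(η T)`, which is where `η ≤ T` enters,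
gives the claim after squaring.
-/

/-- The scalar spectral estimate: `x (1 - a x)^{2n} ≤ 1 / (2 e n a)` on `a x ≤ 1`. -/
lemma drift_scalar_bound {a x : ℝ} (ha : 0 < a) (hx : 0 ≤ x) (hax : a * x ≤ 1) {n : ℕ}
    (hn : 1 ≤ n) :
    (1 - a * x) ^ n * x * (1 - a * x) ^ n ≤ 1 / (2 * Real.exp 1 * a * n) := by
  have hn' : (0 : ℝ) < n := by exact_mod_cast hn
  have h1 : (1 - a * x) ^ n * (1 - a * x) ^ n ≤ Real.exp (-(2 * n * a * x)) := by
    have : (1 - a * x) ^ (2 * n) ≤ Real.exp (-(a * x)) ^ (2 * n) :=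
      pow_le_pow_left₀ (by linarith) (by linarith [Real.add_one_le_exp (-(a * x))]) _
    rw [← Real.exp_nat_mul] at this
    rw [← pow_add, ← two_mul]
    refine this.trans_eq ?_
    congr 1
    push_cast
    ring
  -- `y ≤ exp (y - 1)` at `y = 2 n a x`
  have h2 : 2 * n * a * x ≤ Real.exp (2 * n * a * x - 1) := by
    linarith [Real.add_one_le_exp (2 * n * a * x - 1)]
  rw [le_div_iff₀ (by positivity)]
  calc (1 - a * x) ^ n * x * (1 - a * x) ^ n * (2 * Real.exp 1 * a * n)
      = ((1 - a * x) ^ n * (1 - a * x) ^ n) * (2 * n * a * x) * Real.exp 1 := by ring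
    _ ≤ Real.exp (-(2 * n * a * x)) * Real.exp (2 * n * a * x - 1) * Real.exp 1 := by
        gcongr
    _ = 1 := by
        rw [← Real.exp_add, ← Real.exp_add, Real.exp_eq_one_iff]
        ring

/-- Passage from a bound on the spectral function `x (1 - a x)^{2n}` to the operator norm. -/
lemma drift_norm_sq_le {H : Type*} [NormedAddCommGroup H] [InnerProductSpace ℂ H]
    [CompleteSpace H] (A : H →L[ℂ] H) (hA : A.IsPositive) (a : ℝ) (n : ℕ) (M : ℝ) (hM : 0 ≤ M)
    (h : ∀ x : ℝ, 0 ≤ x → x ≤ ‖A‖ → ‖(1 - a * x) ^ n * x * (1 - a * x) ^ n‖ ≤ M) :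
    ‖(CFC.rpow A (1 / 2 : ℝ)) * (1 - a • A) ^ n‖ ^ 2 ≤ M := by
  rcases subsingleton_or_nontrivial H with hH | hH
  · simpa [Subsingleton.elim ((CFC.rpow A (1 / 2 : ℝ)) * (1 - a • A) ^ n) 0] using hM
  have hA0 : 0 ≤ A := (ContinuousLinearMap.nonneg_iff_isPositive A).2 hA
  have hsa : IsSelfAdjoint A := hA.isSelfAdjoint
  have hSS : CFC.rpow A (1 / 2 : ℝ) * CFC.rpow A (1 / 2 : ℝ) = A := by
    have := CFC.sqrt_mul_sqrt_self A hA0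
    rwa [CFC.sqrt_eq_rpow] at this
  have hS : IsSelfAdjoint (CFC.rpow A (1 / 2 : ℝ)) :=
    IsSelfAdjoint.of_nonneg (CFC.rpow_nonneg (a := A) (y := (1 / 2 : ℝ)))
  have hB : IsSelfAdjoint ((1 - a • A) ^ n) :=
    ((IsSelfAdjoint.one _).sub ((IsSelfAdjoint.all a).smul hsa)).pow n
  have hcfcB : cfc (fun x : ℝ => (1 - a * x) ^ n) A = (1 - a • A) ^ n := by
    rw [cfc_pow (fun x : ℝ => 1 - a * x) n A, cfc_sub (fun _ : ℝ => (1 : ℝ)) (fun x => a * x) A,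
      cfc_const_one ℝ A, cfc_const_mul_id a A]
  have hcfc : (1 - a • A) ^ n * A * (1 - a • A) ^ n =
      cfc (fun x : ℝ => (1 - a * x) ^ n * x * (1 - a * x) ^ n) A := by
    rw [cfc_mul (fun x : ℝ => (1 - a * x) ^ n * x) (fun x => (1 - a * x) ^ n) A,
      cfc_mul (fun x : ℝ => (1 - a * x) ^ n) (fun x => x) A, hcfcB, cfc_id' ℝ A]
  have key : star (CFC.rpow A (1 / 2 : ℝ) * (1 - a • A) ^ n) *
      (CFC.rpow A (1 / 2 : ℝ) * (1 - a • A) ^ n) =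
      cfc (fun x : ℝ => (1 - a * x) ^ n * x * (1 - a * x) ^ n) A := by
    rw [star_mul, hS.star_eq, hB.star_eq, ← hcfc]
    rw [mul_assoc, ← mul_assoc (CFC.rpow A (1 / 2 : ℝ)), hSS, mul_assoc]
  rw [sq, ← CStarRing.norm_star_mul_self, key]
  refine norm_cfc_le hM fun x hx => h x (spectrum_nonneg_of_nonneg hA0 hx) ?_
  exact (le_abs_self x).trans (spectrum.norm_le_norm_of_mem hx)

/-- The bound `∑_{n=1}^{N} n^{-1/2} ≤ 2 √N`, from `1 / √n ≤ 2 √n - 2 √(n - 1)`. -/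
lemma drift_sum_inv_sqrt (N : ℕ) :
    ∑ n ∈ Finset.range N, 1 / √((n : ℝ) + 1) ≤ 2 * √(N : ℝ) := by
  induction N with
  | zero => simp
  | succ k ih =>
    rw [Finset.sum_range_succ]
    have h0 : (0 : ℝ) < √((k : ℝ) + 1) := Real.sqrt_pos.2 (by positivity)
    have h1 := Real.sq_sqrt (show (0 : ℝ) ≤ (k : ℝ) + 1 by positivity)
    have h2 := Real.sq_sqrt (show (0 : ℝ) ≤ (k : ℝ) by positivity)
    have : 1 / √((k : ℝ) + 1) ≤ 2 * √((k : ℝ) + 1) - 2 * √(k : ℝ) := by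
      rw [div_le_iff₀ h0]
      nlinarith [sq_nonneg (√((k : ℝ) + 1) - √(k : ℝ))]
    push_cast
    linarith

open ContinuousLinearMap Finset

/-- The deterministic core of Proposition 4.5 of the paper: for a positive bounded
self-adjoint operator `A` with `‖A‖ ≤ κ²`, `c > 0`, `η > 0` with `η c ‖A‖ ≤ 1`,
an integer `T ≥ 1` with `η ≤ T`, and vectors `e_1, …, e_T` with `‖e_t‖ ≤ D`,
`η² ‖∑_{t=1}^T A^{1/2} (Id − η c A)^{T−t} e_t‖² ≤ (κ + (2/(e c))^{1/2})² η T D²`. -/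
theorem accumulated_drift_bound
    {H : Type*} [NormedAddCommGroup H] [InnerProductSpace ℂ H] [CompleteSpace H]
    (A : H →L[ℂ] H) (hA : A.IsPositive)
    (κ c η : ℝ) (hκ : 0 < κ) (hAκ : ‖A‖ ≤ κ ^ 2)
    (hc : 0 < c) (hη : 0 < η) (hηc : η * c * ‖A‖ ≤ 1)
    (T : ℕ) (hT : 1 ≤ T) (hηT : η ≤ (T : ℝ))
    (v : ℕ → H) (D : ℝ) (hD : 0 ≤ D) (hv : ∀ t, 1 ≤ t → t ≤ T → ‖v t‖ ≤ D) :
    η ^ 2 * ‖∑ t ∈ Finset.Icc 1 T,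
        ((CFC.rpow A (1 / 2 : ℝ)) ∘L (1 - (η * c) • A) ^ (T - t)) (v t)‖ ^ 2 ≤
      (κ + (2 / (Real.exp 1 * c)) ^ (1 / 2 : ℝ)) ^ 2 * η * (T : ℝ) * D ^ 2 := by
  have ha : 0 < η * c := mul_pos hη hc
  have hT0 : (0 : ℝ) < T := by exact_mod_cast hT
  have hax : ∀ x : ℝ, x ≤ ‖A‖ → η * c * x ≤ 1 := fun x hx =>
    (mul_le_mul_of_nonneg_left hx ha.le).trans hηc
  set P : ℕ → (H →L[ℂ] H) := fun n => (CFC.rpow A (1 / 2 : ℝ)) * (1 - (η * c) • A) ^ n with hP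
  have hP0 : ‖P 0‖ ≤ κ := by
    refine le_of_sq_le_sq ?_ hκ.le
    refine drift_norm_sq_le A hA (η * c) 0 (κ ^ 2) (by positivity) fun x hx0 hx => ?_
    simpa [abs_of_nonneg hx0] using hx.trans hAκ
  have hPn : ∀ n : ℕ, ‖P (n + 1)‖ ≤
      √(1 / (2 * Real.exp 1 * (η * c))) * (1 / √((n : ℝ) + 1)) := by
    intro n
    have hb : ‖P (n + 1)‖ ^ 2 ≤ 1 / (2 * Real.exp 1 * (η * c) * ((n + 1 : ℕ) : ℝ)) := by
      refine drift_norm_sq_le A hA (η * c) (n + 1) _ (by positivity) fun x hx0 hx => ?_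
      have h1 : 0 ≤ 1 - η * c * x := by linarith [hax x hx]
      rw [Real.norm_of_nonneg (by positivity)]
      exact drift_scalar_bound ha hx0 (hax x hx) (by omega)
    refine (Real.le_sqrt_of_sq_le hb).trans_eq ?_
    rw [← one_div_mul_one_div, Real.sqrt_mul (by positivity), Real.sqrt_div' 1 (by positivity)]
    simp
  have hsum : ∑ n ∈ Finset.range T, ‖P n‖ ≤
      κ + √(1 / (2 * Real.exp 1 * (η * c))) * (2 * √(T : ℝ)) := by
    obtain ⟨N, rfl⟩ : ∃ N, T = N + 1 := ⟨T - 1, by omega⟩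
    rw [Finset.sum_range_succ', add_comm]
    refine add_le_add hP0 ((Finset.sum_le_sum fun n _ => hPn n).trans ?_)
    rw [← Finset.mul_sum]
    refine mul_le_mul_of_nonneg_left ((drift_sum_inv_sqrt N).trans ?_) (Real.sqrt_nonneg _)
    gcongr
    simp
  have hnorm : ‖∑ t ∈ Finset.Icc 1 T, (P (T - t)) (v t)‖ ≤ (∑ n ∈ Finset.range T, ‖P n‖) * D := by
    have hre : ∑ n ∈ Finset.range T, ‖P n‖ = ∑ t ∈ Finset.Icc 1 T, ‖P (T - t)‖ := by
      refine Finset.sum_bij' (fun n _ => T - n) (fun t _ => T - t) ?_ ?_ ?_ ?_ ?_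
      · intro n hn; simp at hn ⊢; omega
      · intro n hn; simp at hn ⊢; omega
      · intro n hn; simp at hn ⊢; omega
      · intro n hn; simp at hn ⊢; omega
      · intro n hn
        have : T - (T - n) = n := by simp at hn; omega
        rw [this]
    rw [hre, Finset.sum_mul]
    refine norm_sum_le_of_le _ fun t ht => ?_
    obtain ⟨h1, h2⟩ := Finset.mem_Icc.1 ht
    exact (P (T - t)).le_of_opNorm_le_of_le le_rfl (hv t h1 h2)
  set q : ℝ := √(2 / (Real.exp 1 * c)) with hq
  have hq' : (2 / (Real.exp 1 * c)) ^ (1 / 2 : ℝ) = q := (Real.sqrt_eq_rpow _).symm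
  have hηs : η ≤ √(η * T) := Real.le_sqrt_of_sq_le (by nlinarith)
  have hqs : η * (√(1 / (2 * Real.exp 1 * (η * c))) * (2 * √(T : ℝ))) = q * √(η * T) := by
    have e1 : q = √(1 / (2 * Real.exp 1 * (η * c))) * (2 * √η) := by
      rw [hq, show (2 : ℝ) / (Real.exp 1 * c) =
        1 / (2 * Real.exp 1 * (η * c)) * (2 ^ 2 * η) by field_simp,
        Real.sqrt_mul (by positivity), Real.sqrt_mul (by positivity),
        Real.sqrt_sq (by norm_num)]
    rw [e1, Real.sqrt_mul hη.le]
    linear_combination (-2 * √(1 / (2 * Real.exp 1 * (η * c))) * √(T : ℝ)) * Real.mul_self_sqrt hη.le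
  have hfin : η * ‖∑ t ∈ Finset.Icc 1 T, (P (T - t)) (v t)‖ ≤ (κ + q) * √(η * T) * D := by
    calc η * ‖∑ t ∈ Finset.Icc 1 T, (P (T - t)) (v t)‖
        ≤ η * ((κ + √(1 / (2 * Real.exp 1 * (η * c))) * (2 * √(T : ℝ))) * D) := by
          gcongr
          exact hnorm.trans (by gcongr)
      _ = (κ * η + q * √(η * T)) * D := by rw [← hqs]; ring
      _ ≤ (κ * √(η * T) + q * √(η * T)) * D := by gcongr
      _ = (κ + q) * √(η * T) * D := by ring
  rw [hq']
  have h2 := pow_le_pow_left₀ (by positivity) hfin 2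
  rw [mul_pow, mul_pow, mul_pow, Real.sq_sqrt (by positivity)] at h2
  refine h2.trans_eq ?_
  ring
end
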